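/- arXiv:2501.11490 — 2 statements merged into one kernel-verified Lean document; each statement's English description precedes it below -/
import Mathlib

section
/- Let s, t be nonzero real numbers with s² + 4t ≥ 0 and assume {k}_{s,t} ≠ 0 for all 1 ≤ k ≤ d+1. Then for every integer d ≥ 1 and every n ≥ 1, {n+d \choose d+1}_{s,t} = Σ_{k=1}^{n} (φ'_{s,t})^{(d+1)(n−k)} · φ_{s,t}^{k−1} · {k+d−1 \choose d}_{s,t}. -/
/-- Generalized Fibonacci polynomials/numbers: `{0} = 0`, `{1} = 1`,
`{n+2} = s·{n+1} + t·{n}`. -/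
noncomputable def gfib (s t : ℝ) : ℕ → ℝ
  | 0 => 0
  | 1 => 1
  | n + 2 => s * gfib s t (n + 1) + t * gfib s t n

/-- Generalized fibotorial `{n}! = {1}·{2}⋯{n}`, with `{0}! = 1`. -/
noncomputable def gfibFact (s t : ℝ) (n : ℕ) : ℝ :=
  ∏ k ∈ Finset.range n, gfib s t (k + 1)

/-- Generalized fibonomial coefficient `{n choose k} = {n}!/({k}!·{n−k}!)`. -/
noncomputable def gfibBinom (s t : ℝ) (n k : ℕ) : ℝ :=
  gfibFact s t n / (gfibFact s t k * gfibFact s t (n - k))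

/-- `φ_{s,t} = (s + √(s²+4t))/2`. -/
noncomputable def phiST (s t : ℝ) : ℝ := (s + Real.sqrt (s ^ 2 + 4 * t)) / 2

/-- `φ'_{s,t} = (s − √(s²+4t))/2`. -/
noncomputable def phiST' (s t : ℝ) : ℝ := (s - Real.sqrt (s ^ 2 + 4 * t)) / 2

/-- Generalized triangular numbers `{n+1 choose 2} = {n}·{n+1}/{2}`. -/
noncomputable def gtri (s t : ℝ) (n : ℕ) : ℝ :=
  gfib s t n * gfib s t (n + 1) / gfib s t 2

/-- Generalized tetrahedral numbers
`{n+2 choose 3} = {n}·{n+1}·{n+2}/({1}·{2}·{3})`. -/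
noncomputable def gtet (s t : ℝ) (n : ℕ) : ℝ :=
  gfib s t n * gfib s t (n + 1) * gfib s t (n + 2) /
    (gfib s t 1 * gfib s t 2 * gfib s t 3)

theorem gfib_step (s t a b : ℝ) (h1 : a + b = s) (h2 : a * b = -t) (n : ℕ) :
    gfib s t (n + 1) = b * gfib s t n + a ^ n := by
  induction n with
  | zero => simp [gfib]
  | succ k ih =>
    rw [gfib]
    have ht : t = -(a * b) := by linarith
    rw [pow_succ]
    have : a ^ k = gfib s t (k + 1) - b * gfib s t k := by linarith
    rw [this, ← h1]
    subst ht
    ring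

theorem gfib_add (s t a b : ℝ) (h1 : a + b = s) (h2 : a * b = -t) (n m : ℕ) :
    gfib s t (m + n) = b ^ m * gfib s t n + a ^ n * gfib s t m := by
  induction m with
  | zero => simp [gfib]
  | succ k ih =>
    have e : k + 1 + n = (k + n) + 1 := by ring
    rw [e, gfib_step s t a b h1 h2, ih, gfib_step s t a b h1 h2 k]
    ring

theorem gfib_ne (s t a b : ℝ) (h1 : a + b = s) (h2 : a * b = -t) (hs : s ≠ 0) (ht : t ≠ 0)
    (n : ℕ) : gfib s t (n + 1) ≠ 0 := by
  have ha : a ≠ 0 := by rintro rfl; apply ht; linarith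
  by_cases hab : a = b
  · subst hab
    have key : ∀ m : ℕ, gfib s t (m + 1) = (m + 1) * a ^ m := by
      intro m
      induction m with
      | zero => simp [gfib]
      | succ k ih =>
        rw [gfib_step s t a a h1 h2, ih]
        push_cast
        ring
    rw [key]
    have : (n : ℝ) + 1 ≠ 0 := by positivity
    positivity
  · intro h0
    have e1 := gfib_step s t a b h1 h2 (n + 1)
    have e2 := gfib_step s t b a (by linarith) (by linarith) (n + 1)
    rw [h0] at e1 e2
    have e3 : a ^ (n + 1) = b ^ (n + 1) := by linarith
    have e4 : |a| ^ (n + 1) = |b| ^ (n + 1) := by rw [← abs_pow, ← abs_pow, e3]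
    have e5 : |a| = |b| :=
      (pow_left_inj₀ (abs_nonneg a) (abs_nonneg b) (Nat.succ_ne_zero n)).mp e4
    rcases abs_eq_abs.mp e5 with h | h
    · exact hab h
    · apply hs; linarith

theorem stmt1 (s t : ℝ) (hs : s ≠ 0) (ht : t ≠ 0) (hdisc : s ^ 2 + 4 * t ≥ 0)
    (d : ℕ) (hd : 1 ≤ d) (hnz : ∀ k : ℕ, 1 ≤ k → k ≤ d + 1 → gfib s t k ≠ 0)
    (n : ℕ) (hn : 1 ≤ n) :
    gfibBinom s t (n + d) (d + 1) =
      ∑ k ∈ Finset.Icc 1 n,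
        phiST' s t ^ ((d + 1) * (n - k)) * phiST s t ^ (k - 1) *
          gfibBinom s t (k + d - 1) d := by
  set a := phiST s t with ha
  set b := phiST' s t with hb
  have hsq := Real.sq_sqrt hdisc
  have h1 : a + b = s := by rw [ha, hb, phiST, phiST']; ring
  have h2 : a * b = -t := by rw [ha, hb, phiST, phiST']; linarith
  have hne := gfib_ne s t a b h1 h2 hs ht
  have hF : ∀ m, gfibFact s t m ≠ 0 := fun m => Finset.prod_ne_zero_iff.mpr fun k _ => hne k
  have hFs : ∀ m, gfibFact s t (m + 1) = gfibFact s t m * gfib s t (m + 1) :=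
    fun m => Finset.prod_range_succ _ _
  induction n, hn using Nat.le_induction with
  | base =>
    have h0 : gfibFact s t 0 = 1 := by simp [gfibFact]
    simp [gfibBinom, add_comm 1 d, h0, hF]
  | succ n hn ih =>
    rw [Finset.sum_Icc_succ_top (by omega)]
    have e : ∑ k ∈ Finset.Icc 1 n, b ^ ((d + 1) * (n + 1 - k)) * a ^ (k - 1) *
          gfibBinom s t (k + d - 1) d = b ^ (d + 1) * gfibBinom s t (n + d) (d + 1) := by
      rw [ih, Finset.mul_sum]
      refine Finset.sum_congr rfl fun k hk => ?_
      have hk' := (Finset.mem_Icc.mp hk).2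
      have : n + 1 - k = (n - k) + 1 := by omega
      rw [this]
      ring
    rw [e]
    obtain ⟨m, rfl⟩ : ∃ m, n = m + 1 := ⟨n - 1, by omega⟩
    have r1 : m + 1 + 1 + d = (m + 1 + d) + 1 := by ring
    have r2 : (m + 1 + d) + 1 - (d + 1) = m + 1 := by omega
    have r3 : m + 1 + d - (d + 1) = m := by omega
    have r4 : (m + 1 + d) + 1 - 1 - d = m + 1 := by omega
    have key := gfib_add s t a b h1 h2 (m + 1) (d + 1)
    have r5 : d + 1 + (m + 1) = (m + 1 + d) + 1 := by ring
    rw [r5] at key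
    simp only [gfibBinom]
    rw [r1, r2, r3, r4, hFs (m + 1 + d), key, hFs d, hFs m]
    have := hF d
    have := hF m
    have := hne d
    have := hne m
    simp only [Nat.add_sub_cancel, Nat.sub_self, mul_zero, pow_zero, one_mul]
    field_simp
end

section
/- Let s, t be nonzero real numbers with s² + 4t > 0, and for each n ≥ 0 define F_n : ℝ → ℝ by F_n(x) = {n}_{s,t}! / Π_{k=0}^{n} (1 − φ_{s,t}^{n−k}·(φ'_{s,t})^{k}·x). Then F_0(x) = 1/(1−x), and for every n ≥ 0 and every real x ≠ 0 such that all three products Π_{k=0}^{n}(1 − φ^{n−k}φ'^{k}·φx), Π_{k=0}^{n}(1 − φ^{n−k}φ'^{k}·φ'x) and Π_{k=0}^{n+1}(1 − φ^{n+1−k}φ'^{k}·x) are nonzero, one has (F_n(φ_{s,t}·x) − F_n(φ'_{s,t}·x))/((φ_{s,t} − φ'_{s,t})·x) = F_{n+1}(x). In other words, the n-th (φ,φ')-derivative of 1/(1−x) equals {n}_{s,t}!/(φ_{s,t}^n x; q)_{n+1} with q = φ'_{s,t}/φ_{s,t}. -/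
theorem gfib_binet (s t a b : ℝ) (ha : a ^ 2 = s * a + t) (hb : b ^ 2 = s * b + t) (n : ℕ) :
    (a - b) * gfib s t n = a ^ n - b ^ n ∧
      (a - b) * gfib s t (n + 1) = a ^ (n + 1) - b ^ (n + 1) := by
  induction n with
  | zero => simp [gfib]
  | succ n ih =>
    refine ⟨ih.2, ?_⟩
    have h : gfib s t (n + 1 + 1) = s * gfib s t (n + 1) + t * gfib s t n := by rw [gfib]
    rw [h]
    linear_combination s * ih.2 + t * ih.1 - a ^ n * ha + b ^ n * hb

theorem stmt15 (s t : ℝ) (hs : s ≠ 0) (ht : t ≠ 0) (hdisc : s ^ 2 + 4 * t > 0)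
    (F : ℕ → ℝ → ℝ)
    (hF : ∀ n : ℕ, ∀ x : ℝ, F n x =
      gfibFact s t n /
        ∏ k ∈ Finset.range (n + 1), (1 - phiST s t ^ (n - k) * phiST' s t ^ k * x)) :
    (∀ x : ℝ, F 0 x = 1 / (1 - x)) ∧
      ∀ n : ℕ, ∀ x : ℝ, x ≠ 0 →
        (∏ k ∈ Finset.range (n + 1),
            (1 - phiST s t ^ (n - k) * phiST' s t ^ k * (phiST s t * x))) ≠ 0 →
        (∏ k ∈ Finset.range (n + 1),
            (1 - phiST s t ^ (n - k) * phiST' s t ^ k * (phiST' s t * x))) ≠ 0 →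
        (∏ k ∈ Finset.range (n + 2),
            (1 - phiST s t ^ (n + 1 - k) * phiST' s t ^ k * x)) ≠ 0 →
        (F n (phiST s t * x) - F n (phiST' s t * x)) / ((phiST s t - phiST' s t) * x) =
          F (n + 1) x := by
  have hsq : Real.sqrt (s ^ 2 + 4 * t) ^ 2 = s ^ 2 + 4 * t := Real.sq_sqrt hdisc.le
  have hpos : 0 < Real.sqrt (s ^ 2 + 4 * t) := Real.sqrt_pos.mpr hdisc
  have ha : phiST s t ^ 2 = s * phiST s t + t := by
    unfold phiST
    linear_combination hsq / 4
  have hb : phiST' s t ^ 2 = s * phiST' s t + t := by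
    unfold phiST'
    linear_combination hsq / 4
  have hab : phiST s t - phiST' s t ≠ 0 := by
    have : phiST s t - phiST' s t = Real.sqrt (s ^ 2 + 4 * t) := by
      unfold phiST phiST'
      ring
    rw [this]
    exact hpos.ne'
  refine ⟨fun x => by simp [hF, gfibFact], ?_⟩
  intro n x hx h1 h2 h3
  have hbin := (gfib_binet s t _ _ ha hb n).2
  have hfact : gfibFact s t (n + 1) = gfibFact s t n * gfib s t (n + 1) := by
    unfold gfibFact
    rw [Finset.prod_range_succ]
  rw [hF, hF, hF, hfact]
  generalize phiST s t = a at *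
  generalize phiST' s t = b at *
  have e1 : ∏ k ∈ Finset.range (n + 2), (1 - a ^ (n + 1 - k) * b ^ k * x) =
      (∏ k ∈ Finset.range (n + 1), (1 - a ^ (n - k) * b ^ k * (a * x))) *
        (1 - b ^ (n + 1) * x) := by
    rw [Finset.prod_range_succ]
    congr 1
    · refine Finset.prod_congr rfl fun k hk => ?_
      have hk' : k ≤ n := Nat.lt_succ_iff.mp (Finset.mem_range.mp hk)
      rw [Nat.succ_sub hk', pow_succ]
      ring
    · simp
  have e2 : ∏ k ∈ Finset.range (n + 2), (1 - a ^ (n + 1 - k) * b ^ k * x) =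
      (∏ k ∈ Finset.range (n + 1), (1 - a ^ (n - k) * b ^ k * (b * x))) *
        (1 - a ^ (n + 1) * x) := by
    rw [Finset.prod_range_succ']
    congr 1
    · refine Finset.prod_congr rfl fun k hk => ?_
      rw [Nat.add_sub_add_right, pow_succ]
      ring
    · simp
  rw [show n + 1 + 1 = n + 2 from rfl]
  generalize (∏ k ∈ Finset.range (n + 1), (1 - a ^ (n - k) * b ^ k * (a * x))) = P at *
  generalize (∏ k ∈ Finset.range (n + 1), (1 - a ^ (n - k) * b ^ k * (b * x))) = Q at *
  generalize (∏ k ∈ Finset.range (n + 2), (1 - a ^ (n + 1 - k) * b ^ k * x)) = R at *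
  generalize gfibFact s t n = c at *
  have i1 : c / P = c * (1 - b ^ (n + 1) * x) / R := by
    rw [div_eq_div_iff h1 h3, e1]
    ring
  have i2 : c / Q = c * (1 - a ^ (n + 1) * x) / R := by
    rw [div_eq_div_iff h2 h3, e2]
    ring
  rw [i1, i2, ← sub_div, div_div, div_eq_div_iff (mul_ne_zero h3 (mul_ne_zero hab hx)) h3]
  linear_combination (-c * x * R) * hbin
end
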